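/- arXiv:math/0202204 — 5 statements merged into one kernel-verified Lean document; each statement's English description precedes it below -/
import Mathlib

section
/- For every truth assignment a : {1,…,n} → {true,false}, the set S_a = {(i, a(i)) : i = 1,…,n} is a face of the complex Δ if and only if a satisfies every clause of the CNF formula φ. -/
/-- For a clause `C` (a finite set of literals `(j,b)`), the circuit
`C' = {(j, ¬b) : (j,b) ∈ C}`. -/
def clauseDual {n : ℕ} (C : Finset (Fin n × Bool)) : Finset (Fin n × Bool) :=
  C.image (fun l => (l.1, !l.2))

/-- The circuit `P i = {t_i, f_i}`. -/
def pairCircuit {n : ℕ} (i : Fin n) : Finset (Fin n × Bool) :=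
  {(i, true), (i, false)}

/-- `S` is a face of the complex `Δ` associated with the CNF formula `φ`:
it contains none of the circuits `C₁', …, C_m', P₁, …, P_n`. -/
def IsFace {n m : ℕ} (φ : Fin m → Finset (Fin n × Bool)) (S : Finset (Fin n × Bool)) : Prop :=
  (∀ k, ¬ clauseDual (φ k) ⊆ S) ∧ (∀ i, ¬ pairCircuit i ⊆ S)

/-- The set `S_a = {(i, a i) : i}` associated with a truth assignment `a`. -/
def assignFace {n : ℕ} (a : Fin n → Bool) : Finset (Fin n × Bool) :=
  Finset.univ.image (fun i => (i, a i))

/-- The assignment `a` satisfies the clause `C`. -/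
def SatisfiesClause {n : ℕ} (a : Fin n → Bool) (C : Finset (Fin n × Bool)) : Prop :=
  ∃ l ∈ C, a l.1 = l.2

/-- The assignment `a` satisfies every clause of the CNF formula `φ`. -/
def Satisfies {n m : ℕ} (φ : Fin m → Finset (Fin n × Bool)) (a : Fin n → Bool) : Prop :=
  ∀ k, SatisfiesClause a (φ k)

theorem mem_assignFace {n : ℕ} {a : Fin n → Bool} {l : Fin n × Bool} :
    l ∈ assignFace a ↔ a l.1 = l.2 := by
  simp [assignFace, Prod.ext_iff]

theorem clauseDual_subset_assignFace_iff {n : ℕ} {a : Fin n → Bool}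
    {C : Finset (Fin n × Bool)} :
    clauseDual C ⊆ assignFace a ↔ ¬ SatisfiesClause a C := by
  simp only [clauseDual, SatisfiesClause, Finset.image_subset_iff, mem_assignFace, not_exists,
    not_and, Bool.eq_not]

theorem not_pairCircuit_subset_assignFace {n : ℕ} (a : Fin n → Bool) (i : Fin n) :
    ¬ pairCircuit i ⊆ assignFace a := by
  simp [pairCircuit, Finset.insert_subset_iff, mem_assignFace]

theorem face_iff_satisfies {n m : ℕ} (φ : Fin m → Finset (Fin n × Bool)) (a : Fin n → Bool) :
    IsFace φ (assignFace a) ↔ Satisfies φ a := by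
  simp [IsFace, Satisfies, clauseDual_subset_assignFace_iff,
    not_pairCircuit_subset_assignFace]
end

section
/- The map a ↦ S_a = {(i, a(i)) : i = 1,…,n} is a bijection from the set of truth assignments satisfying the CNF formula φ onto the set of faces of Δ of cardinality n; in particular, the number of n-element faces of Δ equals the number of satisfying truth assignments of φ. -/
theorem card_assignFace {n : ℕ} (a : Fin n → Bool) : (assignFace a).card = n := by
  rw [assignFace, Finset.card_image_of_injective _ fun i j h => congrArg Prod.fst h,
    Finset.card_univ, Fintype.card_fin]

theorem assignFace_injective {n : ℕ} :
    Function.Injective (assignFace : (Fin n → Bool) → Finset (Fin n × Bool)) := by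
  intro a b h
  funext i
  have hi : (i, a i) ∈ assignFace b := h ▸ mem_assignFace.2 rfl
  exact (mem_assignFace.1 hi).symm

theorem isFace_assignFace_iff {n m : ℕ} {φ : Fin m → Finset (Fin n × Bool)}
    {a : Fin n → Bool} : IsFace φ (assignFace a) ↔ Satisfies φ a := by
  simp [IsFace, Satisfies, clauseDual_subset_assignFace_iff, not_pairCircuit_subset_assignFace]

theorem exists_assignFace_eq {n : ℕ} {S : Finset (Fin n × Bool)}
    (hS : ∀ i, ¬ pairCircuit i ⊆ S) (hcard : S.card = n) : ∃ a, assignFace a = S := by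
  have hinj : Set.InjOn Prod.fst (S : Set (Fin n × Bool)) := by
    rintro ⟨i, b⟩ hb ⟨j, c⟩ hc (rfl : i = j)
    have hi := hS i
    simp only [pairCircuit, Finset.insert_subset_iff, Finset.singleton_subset_iff] at hi
    cases b <;> cases c <;> simp_all
  have himage : S.image Prod.fst = Finset.univ := by
    rw [← Finset.card_eq_iff_eq_univ, Finset.card_image_of_injOn hinj, hcard, Fintype.card_fin]
  have hex : ∀ i, ∃ b, (i, b) ∈ S := fun i => by
    have hi : i ∈ S.image Prod.fst := himage ▸ Finset.mem_univ i
    simpa using hi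
  choose a ha using hex
  refine ⟨a, Finset.eq_of_subset_of_card_le ?_ (by rw [hcard, card_assignFace])⟩
  rintro ⟨i, b⟩ hi
  obtain rfl : a i = b := mem_assignFace.1 hi
  exact ha i

theorem assignFace_bijOn_and_card {n m : ℕ} (φ : Fin m → Finset (Fin n × Bool)) :
    Set.BijOn assignFace {a : Fin n → Bool | Satisfies φ a}
      {S : Finset (Fin n × Bool) | IsFace φ S ∧ S.card = n} ∧
    Nat.card {S : Finset (Fin n × Bool) // IsFace φ S ∧ S.card = n} =
      Nat.card {a : Fin n → Bool // Satisfies φ a} := by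
  have hbij : Set.BijOn assignFace {a : Fin n → Bool | Satisfies φ a}
      {S : Finset (Fin n × Bool) | IsFace φ S ∧ S.card = n} := by
    refine ⟨fun a ha => ⟨isFace_assignFace_iff.2 ha, card_assignFace a⟩,
      assignFace_injective.injOn, ?_⟩
    rintro S ⟨hface, hcard⟩
    obtain ⟨a, rfl⟩ := exists_assignFace_eq hface.2 hcard
    exact ⟨a, isFace_assignFace_iff.1 hface, rfl⟩
  exact ⟨hbij, (Nat.card_congr (hbij.equiv assignFace)).symm⟩
end

section
/- The complex Δ has a face of cardinality n if and only if the CNF formula φ is satisfiable. -/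
/-- A set of `n` literals containing no complementary pair comes from an assignment. -/
theorem exists_eq_assignFace {n : ℕ} {S : Finset (Fin n × Bool)}
    (hS : ∀ i, ¬ pairCircuit i ⊆ S) (hcard : S.card = n) :
    ∃ a : Fin n → Bool, S = assignFace a := by
  refine ⟨fun i => decide ((i, true) ∈ S), Finset.eq_of_subset_of_card_le ?_ ?_⟩
  · rintro ⟨i, b⟩ hb
    have hi := hS i
    simp only [pairCircuit, Finset.insert_subset_iff, Finset.singleton_subset_iff] at hi
    rw [mem_assignFace]
    cases b <;> simp_all
  · rw [card_assignFace, hcard]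

theorem exists_n_face_iff_satisfiable {n m : ℕ} (φ : Fin m → Finset (Fin n × Bool)) :
    (∃ S : Finset (Fin n × Bool), IsFace φ S ∧ S.card = n) ↔
      ∃ a : Fin n → Bool, Satisfies φ a := by
  constructor
  · rintro ⟨S, hS, hcard⟩
    obtain ⟨a, rfl⟩ := exists_eq_assignFace hS.2 hcard
    exact ⟨a, isFace_assignFace_iff.1 hS⟩
  · rintro ⟨a, ha⟩
    exact ⟨assignFace a, isFace_assignFace_iff.2 ha, card_assignFace a⟩
end

section
/- The number of n-element faces of Δ plus the number of n-element members of the dual complex Δ̄ equals the binomial coefficient C(2n, n), i.e., f_{n-1}(Δ) + f_{n-1}(Δ̄) = C(2n, n). -/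
/-- `S` belongs to the dual complex `Δ̄` associated with `φ`:
`S` is contained in the complement of some circuit. -/
def InDualCNF {n m : ℕ} (φ : Fin m → Finset (Fin n × Bool))
    (S : Finset (Fin n × Bool)) : Prop :=
  (∃ k, S ⊆ (clauseDual (φ k))ᶜ) ∨ (∃ i, S ⊆ (pairCircuit i)ᶜ)

theorem inDualCNF_iff_not_isFace_compl {n m : ℕ} (φ : Fin m → Finset (Fin n × Bool))
    (S : Finset (Fin n × Bool)) : InDualCNF φ S ↔ ¬ IsFace φ Sᶜ := by
  simp only [InDualCNF, IsFace, Finset.subset_compl_comm (s := S), not_and_or, not_forall, not_not]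

theorem card_compl_eq_iff {n : ℕ} (S : Finset (Fin n × Bool)) : Sᶜ.card = n ↔ S.card = n := by
  have h := S.card_add_card_compl
  simp only [Fintype.card_prod, Fintype.card_fin, Fintype.card_bool] at h
  lia

theorem card_faces_add_card_dual {n m : ℕ} (φ : Fin m → Finset (Fin n × Bool)) :
    Nat.card {S : Finset (Fin n × Bool) // IsFace φ S ∧ S.card = n} +
      Nat.card {S : Finset (Fin n × Bool) // InDualCNF φ S ∧ S.card = n} =
      (2 * n).choose n := by
  classical
  have dual_card : Nat.card {S : Finset (Fin n × Bool) // InDualCNF φ S ∧ S.card = n} =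
      Nat.card {S : Finset (Fin n × Bool) // ¬ IsFace φ S ∧ S.card = n} :=
    Nat.card_congr <| (Equiv.subtypeEquiv (compl_involutive.toPerm _) fun S => by
      simp [inDualCNF_iff_not_isFace_compl, card_compl_eq_iff])
  rw [dual_card, Nat.card_eq_fintype_card, Nat.card_eq_fintype_card, Fintype.card_subtype,
    Fintype.card_subtype]
  simp only [and_comm (b := Finset.card _ = n), ← Finset.filter_filter]
  rw [Finset.card_filter_add_card_filter_not, Finset.univ_filter_card_eq,
    Finset.card_powersetCard, Finset.card_univ, Fintype.card_prod, Fintype.card_fin,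
    Fintype.card_bool, mul_comm]
end

section
/- For a finite graph G with at least one edge and no isolated vertices, the simplicial complex Δ(G) is partitionable if and only if at most one connected component of G is a tree. -/
/-- The faces of the simplicial complex `Δ(G)` associated with a graph `G`:
the empty set, the singletons of vertices, and the edges. -/
def GraphFace {V : Type} [DecidableEq V] (G : SimpleGraph V) (S : Finset V) : Prop :=
  S = ∅ ∨ (∃ v : V, S = {v}) ∨ (∃ u w : V, G.Adj u w ∧ S = {u, w})

/-- `Δ(G)` is partitionable in the sense of Stanley: its set of faces (including the
empty face) can be partitioned into intervals `[R i, F i]` whose tops `F i` are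
facets, i.e. edges of `G`. -/
def GraphPartitionable {V : Type} [DecidableEq V] (G : SimpleGraph V) : Prop :=
  ∃ (N : ℕ) (R F : Fin N → Finset V),
    (∀ i, R i ⊆ F i) ∧
    (∀ i, ∃ u w : V, G.Adj u w ∧ F i = {u, w}) ∧
    (∀ S : Finset V, GraphFace G S → ∃! i, R i ⊆ S ∧ S ⊆ F i)

namespace SimpleGraph

variable {V : Type}

/-- A choice of neighbours `g` such that the assignment of the edge `s(v, g v)` to each vertex `v`
fails to be injective only at an edge through `r`. -/
structure IsOrientedAwayFrom (G : SimpleGraph V) (r : V) (g : V → V) : Prop where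
  adj : ∀ v, G.Adj v (g v)
  eq_or_eq : ∀ v, g (g v) = v → v = r ∨ g v = r

lemma Connected.exists_adj_dist_lt {G : SimpleGraph V} (hG : G.Connected) {r v : V} (hv : v ≠ r) :
    ∃ w, G.Adj v w ∧ G.dist w r < G.dist v r := by
  obtain ⟨p, hp⟩ := hG.exists_walk_length_eq_dist v r
  cases p with
  | nil => exact absurd rfl hv
  | cons h p =>
    refine ⟨_, h, ?_⟩
    have := dist_le p
    rw [Walk.length_cons] at hp
    omega

/-- In a connected graph, every vertex other than the root can be assigned a parent, and the root
an arbitrary vertex, so that only the root and its children can have themselves as grandparent. -/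
lemma Connected.exists_parent {G : SimpleGraph V} (hG : G.Connected) (r s : V) :
    ∃ g : V → V, g r = s ∧ (∀ v, v ≠ r → G.Adj v (g v)) ∧
      ∀ v, g (g v) = v → v = r ∨ g v = r := by
  classical
  choose! p hadj hlt using fun v (hv : v ≠ r) => hG.exists_adj_dist_lt hv
  refine ⟨Function.update p r s, by simp, fun v hv => by simpa [hv] using hadj v hv, ?_⟩
  intro v hgg
  by_contra! h
  obtain ⟨hv, hgv⟩ := h
  have h₁ := hlt v hv
  rw [Function.update_of_ne hv] at hgv hgg
  have h₂ := hlt _ hgv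
  rw [Function.update_of_ne hgv] at hgg
  rw [hgg] at h₂
  omega

lemma Connected.exists_isOrientedAwayFrom {G : SimpleGraph V} (hG : G.Connected)
    (hiso : ∀ v, ∃ w, G.Adj v w) :
    ∃ r g, G.IsOrientedAwayFrom r g ∧ (¬ G.IsTree → ∀ v, g (g v) ≠ v) := by
  by_cases hT : G.IsTree
  · obtain ⟨r⟩ := hG.nonempty
    obtain ⟨s, hs⟩ := hiso r
    obtain ⟨g, hr, hadj, hg⟩ := hG.exists_parent r s
    refine ⟨r, g, ⟨fun v => ?_, hg⟩, fun h => absurd hT h⟩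
    by_cases hv : v = r
    · subst hv
      rwa [hr]
    · exact hadj v hv
  · have hcyc : ¬ G.IsAcyclic := fun h => hT ⟨hG, h⟩
    rw [isAcyclic_iff_forall_adj_isBridge] at hcyc
    push Not at hcyc
    obtain ⟨x, y, hxy, hbr⟩ := hcyc
    obtain ⟨g, hx, hadj, hg⟩ :=
      (hG.connected_delete_edge_of_not_isBridge hbr).exists_parent x y
    have hgy : g y ≠ x := fun h => by
      have := hadj y hxy.ne'
      rw [h] at this
      simp [Sym2.eq_swap] at this
    have hg' : ∀ v, g (g v) ≠ v := by
      intro v hv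
      rcases hg v hv with h | h
      · subst h
        rw [hx] at hv
        exact hgy hv
      · rw [h, hx] at hv
        subst hv
        exact hgy h
    refine ⟨x, g, ⟨fun v => ?_, fun v hv => absurd hv (hg' v)⟩, fun _ => hg'⟩
    by_cases hv : v = x
    · subst hv
      rwa [hx]
    · exact (deleteEdges_le _) (hadj v hv)

lemma exists_isOrientedAwayFrom_of_isTree_unique [Nonempty V] {G : SimpleGraph V}
    (hiso : ∀ v, ∃ w, G.Adj v w)
    (huniq : ∀ c₁ c₂ : G.ConnectedComponent,
      (G.induce c₁.supp).IsTree → (G.induce c₂.supp).IsTree → c₁ = c₂) :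
    ∃ r g, G.IsOrientedAwayFrom r g := by
  have hcomp : ∀ c : G.ConnectedComponent, ∃ (r : c.supp) (g : c.supp → c.supp),
      (G.induce c.supp).IsOrientedAwayFrom r g ∧
        (¬ (G.induce c.supp).IsTree → ∀ v, g (g v) ≠ v) := by
    intro c
    refine Connected.exists_isOrientedAwayFrom c.connected_toSimpleGraph ?_
    rintro ⟨v, hv⟩
    obtain ⟨w, hw⟩ := hiso v
    exact ⟨⟨w, c.mem_supp_of_adj_mem_supp hv hw⟩, hw⟩
  choose r g hg hgt using hcomp
  have hval : ∀ (c : G.ConnectedComponent) (v : c.supp),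
      (g (G.connectedComponentMk v) ⟨v, rfl⟩ : V) = g c v := by
    rintro c ⟨v, hv⟩
    obtain rfl : G.connectedComponentMk v = c := hv
    rfl
  obtain ⟨r₀, hr₀⟩ : ∃ r₀ : V, ∀ c, (G.induce c.supp).IsTree → (r c : V) = r₀ := by
    by_cases h : ∃ c : G.ConnectedComponent, (G.induce c.supp).IsTree
    · obtain ⟨c, hc⟩ := h
      refine ⟨r c, fun c' hc' => ?_⟩
      rw [huniq c' c hc' hc]
    · exact ⟨Classical.arbitrary V, fun c hc => absurd ⟨c, hc⟩ h⟩
  refine ⟨r₀, fun v => g (G.connectedComponentMk v) ⟨v, rfl⟩, fun v => ?_, fun v hv => ?_⟩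
  · exact (hg (G.connectedComponentMk v)).adj ⟨v, rfl⟩
  · rw [hval] at hv
    have hv' : g (G.connectedComponentMk v) (g (G.connectedComponentMk v) ⟨v, rfl⟩) = ⟨v, rfl⟩ :=
      Subtype.ext hv
    by_cases hT : (G.induce (G.connectedComponentMk v).supp).IsTree
    · rw [← hr₀ _ hT]
      exact ((hg _).eq_or_eq _ hv').imp (congrArg Subtype.val) (congrArg Subtype.val)
    · exact absurd hv' (hgt _ hT _)

lemma IsOrientedAwayFrom.not_isTree [Finite V] {G : SimpleGraph V} {r : V} {g : V → V}
    (hg : G.IsOrientedAwayFrom r g) {c : G.ConnectedComponent} (hr : r ∉ c.supp) :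
    ¬ (G.induce c.supp).IsTree := by
  intro hT
  have hmem : ∀ v : c.supp, g v ∈ c.supp := fun v =>
    c.mem_supp_of_adj_mem_supp v.2 (hg.adj v)
  let e : c.supp → (G.induce c.supp).edgeSet := fun v => ⟨s(v, ⟨g v, hmem v⟩), hg.adj v⟩
  have he : Function.Injective e := by
    intro v w h
    by_contra hne
    have h' : s(v, (⟨g v, hmem v⟩ : c.supp)) = s(w, ⟨g w, hmem w⟩) := congrArg Subtype.val h
    rw [Sym2.eq_iff] at h'
    rcases h' with h' | ⟨h₁, h₂⟩
    · exact hne h'.1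
    · have h₁' : (v : V) = g w := congrArg Subtype.val h₁
      have h₂' : g v = (w : V) := congrArg Subtype.val h₂
      rcases hg.eq_or_eq v (by rw [h₂', h₁']) with h | h
      · exact hr (h ▸ v.2)
      · exact hr (h ▸ hmem v)
  have hle := Nat.card_le_card_of_injective e he
  have := (isTree_iff_connected_and_card.mp hT).2
  omega

/-- The edge at the root may be taken to be the edge of one of its neighbours as well. -/
lemma IsOrientedAwayFrom.exists_apply_apply_eq {G : SimpleGraph V} {r : V} {g : V → V}
    (hg : G.IsOrientedAwayFrom r g) : ∃ g', G.IsOrientedAwayFrom r g' ∧ g' (g' r) = r := by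
  classical
  have hne : r ≠ g r := (hg.adj r).ne
  refine ⟨Function.update g (g r) r, ⟨fun v => ?_, fun v hv => ?_⟩, by simp [hne]⟩
  · by_cases hv : v = g r
    · subst hv
      simpa using (hg.adj r).symm
    · simpa [hv] using hg.adj v
  · by_cases h : v = g r
    · subst h
      simp
    · rw [Function.update_of_ne h] at hv ⊢
      by_cases h' : g v = g r
      · rw [h', Function.update_self] at hv
        exact Or.inl hv.symm
      · rw [Function.update_of_ne h'] at hv
        exact hg.eq_or_eq v hv

end SimpleGraph

open SimpleGraph

lemma GraphPartitionable.exists_isOrientedAwayFrom {V : Type} [DecidableEq V] {G : SimpleGraph V}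
    (h : GraphPartitionable G) : ∃ r g, G.IsOrientedAwayFrom r g := by
  obtain ⟨N, R, F, -, hF, huniq⟩ := h
  obtain ⟨i₀, -, hi₀⟩ := huniq ∅ (Or.inl rfl)
  obtain ⟨r, w, -, hrw⟩ := hF i₀
  have hex : ∀ v, ∃ i u, R i ⊆ {v} ∧ G.Adj v u ∧ F i = {v, u} := by
    intro v
    obtain ⟨i, ⟨hR, hvF⟩, -⟩ := huniq {v} (Or.inr (Or.inl ⟨v, rfl⟩))
    obtain ⟨a, b, hab, hFi⟩ := hF i
    rw [hFi] at hvF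
    rcases (by simpa using hvF : v = a ∨ v = b) with rfl | rfl
    · exact ⟨i, b, hR, hab, hFi⟩
    · exact ⟨i, a, hR, hab.symm, by rw [hFi, Finset.pair_comm]⟩
  choose i g hR hadj hFi using hex
  refine ⟨r, g, hadj, fun v hv => ?_⟩
  have hF' : F (i (g v)) = {v, g v} := by rw [hFi, hv, Finset.pair_comm]
  have hi : i v = i (g v) := by
    refine (huniq {v, g v} (Or.inr (Or.inr ⟨v, g v, hadj v, rfl⟩))).unique
      ⟨(hR v).trans (by simp), (hFi v).ge⟩ ⟨(hR (g v)).trans (by simp), hF'.ge⟩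
  have hRv : R (i v) ⊆ ∅ := by
    intro x hx
    have h₁ := Finset.mem_singleton.mp (hR v hx)
    have h₂ := Finset.mem_singleton.mp (hR (g v) (hi ▸ hx))
    exact absurd (h₁.symm.trans h₂) (hadj v).ne
  have hi' : i v = i₀ := hi₀ _ ⟨hRv, Finset.empty_subset _⟩
  have hmem : r ∈ F (i v) := by rw [hi', hrw]; simp
  rw [hFi] at hmem
  simpa [eq_comm] using hmem

lemma SimpleGraph.IsOrientedAwayFrom.graphPartitionable {V : Type} [Finite V] [DecidableEq V]
    {G : SimpleGraph V} {r : V} {g : V → V} (hg : G.IsOrientedAwayFrom r g) :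
    GraphPartitionable G := by
  classical
  obtain ⟨g, hg, hr⟩ := hg.exists_apply_apply_eq
  let F : G.edgeSet → Finset V := fun e => e.1.toFinset
  let R : G.edgeSet → Finset V := fun e =>
    {x ∈ e.1.toFinset | ∀ y ∈ e.1, y ≠ x → s(y, g y) ≠ e.1}
  have hRF : ∀ e, R e ⊆ F e := fun e => Finset.filter_subset _ _
  have hF : ∀ e, ∃ u w, G.Adj u w ∧ F e = {u, w} := by
    rintro ⟨⟨u, w⟩, h⟩
    exact ⟨u, w, h, by ext; simp [F]⟩
  have hR : ∀ a b (hab : G.Adj a b), R ⟨s(a, b), hab⟩ ⊆ {a} ↔ g a = b := by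
    intro a b hab
    have hne := hab.ne
    constructor
    · intro h
      by_contra hga
      have hb : b ∈ R ⟨s(a, b), hab⟩ := by
        simp only [R, Finset.mem_filter, Sym2.mem_toFinset, Sym2.mem_iff]
        refine ⟨by simp, ?_⟩
        rintro y (rfl | rfl) hy
        · simpa [hne] using hga
        · exact absurd rfl hy
      exact hne (Finset.mem_singleton.mp (h hb)).symm
    · rintro rfl x hx
      simp only [R, Finset.mem_filter, Sym2.mem_toFinset, Sym2.mem_iff] at hx
      obtain ⟨hx, hx'⟩ := hx
      by_contra hxa
      exact hx' a (Or.inl rfl) (fun h => hxa (by simp [h])) rfl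
  have huniq : ∀ S, GraphFace G S → ∃! e, R e ⊆ S ∧ S ⊆ F e := by
    rintro S (rfl | ⟨v, rfl⟩ | ⟨u, w, huw, rfl⟩)
    · have key : ∀ a b (hab : G.Adj a b), R ⟨s(a, b), hab⟩ ⊆ ∅ ↔ g a = b ∧ g b = a := by
        intro a b hab
        rw [← hR a b hab, ← hR b a hab.symm]
        have hs : (⟨s(b, a), hab.symm⟩ : G.edgeSet) = ⟨s(a, b), hab⟩ :=
          Subtype.ext Sym2.eq_swap
        rw [hs]
        refine ⟨fun h => ⟨h.trans (by simp), h.trans (by simp)⟩, fun ⟨h₁, h₂⟩ x hx => ?_⟩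
        exact absurd ((Finset.mem_singleton.mp (h₁ hx)).symm.trans
          (Finset.mem_singleton.mp (h₂ hx))) hab.ne
      refine ⟨⟨s(r, g r), hg.adj r⟩, ⟨(key _ _ _).2 ⟨rfl, hr⟩, by simp⟩, ?_⟩
      rintro ⟨⟨a, b⟩, hab⟩ ⟨h, -⟩
      obtain ⟨rfl, h₂⟩ := (key a b hab).1 h
      refine Subtype.ext ?_
      rcases hg.eq_or_eq a h₂ with rfl | h
      · rfl
      · subst h
        change s(a, g a) = s(g a, g (g a))
        rw [h₂, Sym2.eq_swap]
    · refine ⟨⟨s(v, g v), hg.adj v⟩, ⟨(hR _ _ _).2 rfl, by simp [F]⟩, ?_⟩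
      rintro ⟨e, he⟩ ⟨h, hv⟩
      obtain ⟨b, rfl⟩ : v ∈ e := by simpa [F] using hv
      have := (hR v b he).1 h
      subst this
      rfl
    · refine ⟨⟨s(u, w), huw⟩, ⟨(hRF _).trans ?_, ?_⟩, ?_⟩
      · intro x; simp [F]
      · intro x; simp [F]
      · rintro ⟨e, he⟩ ⟨-, h⟩
        refine Subtype.ext ((Sym2.mem_and_mem_iff huw.ne).1 ?_)
        simpa [F, Finset.insert_subset_iff] using h
  have := Fintype.ofFinite G.edgeSet
  let φ := Fintype.equivFin G.edgeSet
  refine ⟨_, R ∘ φ.symm, F ∘ φ.symm, fun i => hRF _, fun i => hF _, fun S hS => ?_⟩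
  exact (φ.symm.existsUnique_congr_right (q := fun e => R e ⊆ S ∧ S ⊆ F e)).2 (huniq S hS)

theorem graph_partitionable_iff_at_most_one_tree_component {V : Type} [Fintype V]
    [DecidableEq V] (G : SimpleGraph V) (hne : G.edgeSet.Nonempty)
    (hiso : ∀ v : V, ∃ w, G.Adj v w) :
    GraphPartitionable G ↔
      ∀ c₁ c₂ : G.ConnectedComponent,
        (G.induce c₁.supp).IsTree → (G.induce c₂.supp).IsTree → c₁ = c₂ := by
  constructor
  · intro h c₁ c₂ h₁ h₂
    obtain ⟨r, g, hg⟩ := h.exists_isOrientedAwayFrom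
    have hmem : ∀ c : G.ConnectedComponent, (G.induce c.supp).IsTree →
        G.connectedComponentMk r = c := fun c hc => by
      by_contra hr
      exact hg.not_isTree (c := c) hr hc
    rw [← hmem c₁ h₁, hmem c₂ h₂]
  · intro h
    have : Nonempty V := hne.elim fun e _ => ⟨e.out.1⟩
    obtain ⟨r, g, hg⟩ := exists_isOrientedAwayFrom_of_isTree_unique hiso h
    exact hg.graphPartitionable
end
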